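/- arXiv:1801.02979 — 3 statements merged into one kernel-verified Lean document; each statement's English description precedes it below -/
import Mathlib

section
/- Let 1 ≤ k < L be integers and 0 ≤ λ ≤ 1. If ū satisfies the fixed-point recursion ū_0 = 1 and ū_{m+1} = (λ/k)·f(ū_m), then for all m ≥ 0, ū_m ≤ λ^{((L/k)^m − 1)/(L/k − 1)}. -/
open Finset

/-- The polynomial `f ≡ f^{(L,k)}` from the paper. -/
noncomputable def fLk (L k : ℕ) (x : ℝ) : ℝ :=
  ∑ i ∈ Finset.Icc 1 k,
    (L.choose (L - k + i) : ℝ) * ((L - k + i - 2).choose (i - 1) : ℝ) *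
      (-1 : ℝ) ^ (i - 1) * x ^ (L - k + i)

lemma aux_A (p k s : ℕ) (hs : s < p + k) :
    ∑ i ∈ range k, (-1 : ℝ) ^ i * ((p + i).choose i : ℝ) * (s.choose (p + i) : ℝ)
      = if s = p then 1 else 0 := by
  by_cases hsp : s < p
  · rw [if_neg (by omega)]
    apply Finset.sum_eq_zero
    intro i _
    rw [Nat.choose_eq_zero_of_lt (show s < p + i by omega)]
    simp
  obtain ⟨d, rfl⟩ : ∃ d, s = p + d := ⟨s - p, by omega⟩
  have h1 : ∀ i ∈ range k, (-1 : ℝ) ^ i * ((p + i).choose i : ℝ) * ((p + d).choose (p + i) : ℝ)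
      = ((p + d).choose p : ℝ) * ((-1 : ℝ) ^ i * (d.choose i : ℝ)) := by
    intro i _
    by_cases hid : i ≤ d
    · have h := Nat.choose_mul (n := p + d) (k := p + i) (s := p) (by omega)
      have e1 : p + d - p = d := by omega
      have e2 : p + i - p = i := by omega
      rw [e1, e2, Nat.choose_symm_add] at h
      have h' : ((p + d).choose (p + i) : ℝ) * ((p + i).choose i : ℝ)
          = ((p + d).choose p : ℝ) * (d.choose i : ℝ) := by exact_mod_cast h
      linear_combination (-1 : ℝ) ^ i * h'
    · rw [Nat.choose_eq_zero_of_lt (show p + d < p + i by omega),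
        Nat.choose_eq_zero_of_lt (show d < i by omega)]
      simp
  rw [Finset.sum_congr rfl h1, ← Finset.mul_sum]
  have h2 : ∑ i ∈ range k, (-1 : ℝ) ^ i * (d.choose i : ℝ)
      = ∑ i ∈ range (d + 1), (-1 : ℝ) ^ i * (d.choose i : ℝ) := by
    symm
    apply Finset.sum_subset
    · intro i hi
      simp only [Finset.mem_range] at *
      omega
    · intro i _ hi
      simp only [Finset.mem_range] at *
      rw [Nat.choose_eq_zero_of_lt (show d < i by omega)]
      simp
  have h3 : ∑ i ∈ range (d + 1), (-1 : ℝ) ^ i * (d.choose i : ℝ) = if d = 0 then 1 else 0 := by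
    have := Int.alternating_sum_range_choose (n := d)
    exact_mod_cast this
  rw [h2, h3]
  by_cases hd : d = 0
  · subst hd; simp
  · simp [hd]

lemma aux_S (p k s : ℕ) (hs : s ≤ p + k) :
    ∑ i ∈ range k, (-1 : ℝ) ^ i * ((p + i).choose i : ℝ) * (s.choose (p + 1 + i) : ℝ)
      = if p + 1 ≤ s then 1 else 0 := by
  induction s with
  | zero =>
    simp only [show ∀ i, p + 1 + i = (p + i) + 1 from fun i => by omega]
    simp
  | succ s ih =>
    have h := ih (by omega)
    have hA := aux_A p k s (by omega)
    have : ∀ i ∈ range k, (-1 : ℝ) ^ i * ((p + i).choose i : ℝ) * ((s + 1).choose (p + 1 + i) : ℝ)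
        = (-1 : ℝ) ^ i * ((p + i).choose i : ℝ) * (s.choose (p + i) : ℝ)
        + (-1 : ℝ) ^ i * ((p + i).choose i : ℝ) * (s.choose (p + 1 + i) : ℝ) := by
      intro i _
      rw [show p + 1 + i = (p + i) + 1 by omega, Nat.choose_succ_succ]
      push_cast
      ring
    rw [Finset.sum_congr rfl this, Finset.sum_add_distrib, hA, h]
    split_ifs <;> first | omega | norm_num

lemma aux_H (p k t : ℕ) (ht : t ≤ p + k + 1) :
    ∑ i ∈ range k, (-1 : ℝ) ^ i * ((p + i).choose i : ℝ) * (t.choose (p + 2 + i) : ℝ)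
      = ((t - (p + 1) : ℕ) : ℝ) := by
  induction t with
  | zero =>
    simp only [show ∀ i, p + 2 + i = (p + 1 + i) + 1 from fun i => by omega]
    simp
  | succ s ih =>
    have h := ih (by omega)
    have hA := aux_S p k s (by omega)
    have : ∀ i ∈ range k, (-1 : ℝ) ^ i * ((p + i).choose i : ℝ) * ((s + 1).choose (p + 2 + i) : ℝ)
        = (-1 : ℝ) ^ i * ((p + i).choose i : ℝ) * (s.choose (p + 1 + i) : ℝ)
        + (-1 : ℝ) ^ i * ((p + i).choose i : ℝ) * (s.choose (p + 2 + i) : ℝ) := by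
      intro i _
      rw [show p + 2 + i = (p + 1 + i) + 1 by omega, Nat.choose_succ_succ]
      push_cast
      ring
    rw [Finset.sum_congr rfl this, Finset.sum_add_distrib, hA, h]
    split_ifs with hh
    · rw [show s + 1 - (p + 1) = (s - (p + 1)) + 1 by omega]
      push_cast
      ring
    · rw [show s + 1 - (p + 1) = 0 by omega, show s - (p + 1) = 0 by omega]
      simp

lemma aux_D (p k t : ℕ) (ht : t ≤ p + k + 1) :
    ∑ i ∈ range k, ((p + 2 + i : ℕ) : ℝ) *
        ((-1 : ℝ) ^ i * ((p + i).choose i : ℝ) * (t.choose (p + 2 + i) : ℝ))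
      = if p + 2 ≤ t then (t : ℝ) else 0 := by
  cases t with
  | zero =>
    simp only [show ∀ i, p + 2 + i = (p + 1 + i) + 1 from fun i => by omega]
    simp
  | succ s =>
    have hA := aux_S p k s (by omega)
    have : ∀ i ∈ range k, ((p + 2 + i : ℕ) : ℝ) *
        ((-1 : ℝ) ^ i * ((p + i).choose i : ℝ) * ((s + 1).choose (p + 2 + i) : ℝ))
        = ((s + 1 : ℕ) : ℝ) *
          ((-1 : ℝ) ^ i * ((p + i).choose i : ℝ) * (s.choose (p + 1 + i) : ℝ)) := by
      intro i _
      have h := Nat.add_one_mul_choose_eq s (p + 1 + i)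
      rw [show p + 2 + i = (p + 1 + i) + 1 by omega]
      have h' : ((s + 1 : ℕ) : ℝ) * (s.choose (p + 1 + i) : ℝ)
        = ((s + 1).choose (p + 1 + i + 1) : ℝ) * ((p + 1 + i + 1 : ℕ) : ℝ) := by exact_mod_cast h
      linear_combination (-(-1 : ℝ) ^ i * ((p + i).choose i : ℝ)) * h'
    rw [Finset.sum_congr rfl this, ← Finset.mul_sum, hA]
    by_cases h : p + 1 ≤ s
    · rw [if_pos h, if_pos (by omega), mul_one]
    · rw [if_neg h, if_neg (by omega), mul_zero]

lemma aux_B (L j : ℕ) (hj : j ≤ L) (x : ℝ) :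
    (L.choose j : ℝ) * x ^ j = ∑ t ∈ range (L + 1),
      (t.choose j : ℝ) * ((L.choose t : ℝ) * x ^ t * (1 - x) ^ (L - t)) := by
  obtain ⟨d, rfl⟩ : ∃ d, L = j + d := ⟨L - j, by omega⟩
  rw [show j + d + 1 = j + (d + 1) by omega, Finset.sum_range_add]
  have h0 : ∑ t ∈ range j, (t.choose j : ℝ) *
      (((j + d).choose t : ℝ) * x ^ t * (1 - x) ^ (j + d - t)) = 0 := by
    apply Finset.sum_eq_zero
    intro t ht
    rw [Nat.choose_eq_zero_of_lt (Finset.mem_range.1 ht)]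
    simp
  rw [h0, zero_add]
  have h1 : ∀ i ∈ range (d + 1), ((j + i).choose j : ℝ) *
      (((j + d).choose (j + i) : ℝ) * x ^ (j + i) * (1 - x) ^ (j + d - (j + i)))
      = ((j + d).choose j : ℝ) * x ^ j * (x ^ i * (1 - x) ^ (d - i) * (d.choose i : ℝ)) := by
    intro i _
    have h := Nat.choose_mul (n := j + d) (k := j + i) (s := j) (by omega)
    have e1 : j + d - j = d := by omega
    have e2 : j + i - j = i := by omega
    rw [e1, e2] at h
    have h' : ((j + d).choose (j + i) : ℝ) * ((j + i).choose j : ℝ)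
        = ((j + d).choose j : ℝ) * (d.choose i : ℝ) := by exact_mod_cast h
    rw [show j + d - (j + i) = d - i by omega, pow_add]
    linear_combination x ^ j * x ^ i * (1 - x) ^ (d - i) * h'
  rw [Finset.sum_congr rfl h1, ← Finset.mul_sum, ← add_pow]
  simp

lemma fLk_eq (p k : ℕ) (x : ℝ) : fLk (p + k + 1) k x = ∑ i ∈ range k,
    ((-1 : ℝ) ^ i * ((p + i).choose i : ℝ)) *
      (((p + k + 1).choose (p + 2 + i) : ℝ) * x ^ (p + 2 + i)) := by
  unfold fLk
  rw [← Finset.Ico_add_one_right_eq_Icc, Finset.sum_Ico_eq_sum_range]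
  apply Finset.sum_congr (by simp)
  intro i _
  rw [show p + k + 1 - k + (1 + i) = p + 2 + i by omega, show p + 2 + i - 2 = p + i by omega,
    show 1 + i - 1 = i by omega]
  ring

/-- The function `x f'(x)`. -/
noncomputable def gAux (p k : ℕ) (x : ℝ) : ℝ := ∑ i ∈ range k,
    ((p + 2 + i : ℕ) : ℝ) * (((-1 : ℝ) ^ i * ((p + i).choose i : ℝ)) *
      (((p + k + 1).choose (p + 2 + i) : ℝ) * x ^ (p + 2 + i)))

lemma fLk_bern (p k : ℕ) (x : ℝ) : fLk (p + k + 1) k x = ∑ t ∈ range (p + k + 1 + 1),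
    ((t - (p + 1) : ℕ) : ℝ) *
      (((p + k + 1).choose t : ℝ) * x ^ t * (1 - x) ^ (p + k + 1 - t)) := by
  rw [fLk_eq]
  have : ∀ i ∈ range k, ((-1 : ℝ) ^ i * ((p + i).choose i : ℝ)) *
      (((p + k + 1).choose (p + 2 + i) : ℝ) * x ^ (p + 2 + i)) = _ := fun i hi => by
    rw [aux_B _ _ (by have := Finset.mem_range.1 hi; omega), Finset.mul_sum]
  rw [Finset.sum_congr rfl this, Finset.sum_comm]
  apply Finset.sum_congr rfl
  intro t ht
  rw [← aux_H p k t (by have := Finset.mem_range.1 ht; omega), Finset.sum_mul]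
  apply Finset.sum_congr rfl
  intro i _
  ring

lemma gAux_bern (p k : ℕ) (x : ℝ) : gAux p k x = ∑ t ∈ range (p + k + 1 + 1),
    (if p + 2 ≤ t then (t : ℝ) else 0) *
      (((p + k + 1).choose t : ℝ) * x ^ t * (1 - x) ^ (p + k + 1 - t)) := by
  unfold gAux
  have : ∀ i ∈ range k, ((p + 2 + i : ℕ) : ℝ) * (((-1 : ℝ) ^ i * ((p + i).choose i : ℝ)) *
      (((p + k + 1).choose (p + 2 + i) : ℝ) * x ^ (p + 2 + i))) = _ := fun i hi => by
    rw [aux_B _ _ (by have := Finset.mem_range.1 hi; omega), Finset.mul_sum, Finset.mul_sum]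
  rw [Finset.sum_congr rfl this, Finset.sum_comm]
  apply Finset.sum_congr rfl
  intro t ht
  rw [← aux_D p k t (by have := Finset.mem_range.1 ht; omega), Finset.sum_mul]
  apply Finset.sum_congr rfl
  intro i _
  ring

lemma fLk_nonneg (p k : ℕ) (x : ℝ) (h0 : 0 ≤ x) (h1 : x ≤ 1) : 0 ≤ fLk (p + k + 1) k x := by
  rw [fLk_bern]
  have : 0 ≤ 1 - x := by linarith
  positivity

lemma fLk_le_gAux (p k : ℕ) (x : ℝ) (h0 : 0 ≤ x) (h1 : x ≤ 1) :
    ((p + k + 1 : ℕ) : ℝ) * fLk (p + k + 1) k x ≤ k * gAux p k x := by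
  rw [fLk_bern, gAux_bern, Finset.mul_sum, Finset.mul_sum]
  apply Finset.sum_le_sum
  intro t ht
  have hx : 0 ≤ 1 - x := by linarith
  rw [← mul_assoc, ← mul_assoc (k : ℝ)]
  apply mul_le_mul_of_nonneg_right _ (by positivity)
  have ht' := Finset.mem_range.1 ht
  split_ifs with h
  · obtain ⟨s, rfl⟩ : ∃ s, t = p + 1 + s := ⟨t - (p + 1), by omega⟩
    rw [show p + 1 + s - (p + 1) = s by omega]
    have : (s : ℝ) ≤ k := by exact_mod_cast (show s ≤ k by omega)
    have hp : (0 : ℝ) ≤ p := by positivity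
    push_cast
    nlinarith
  · rw [show t - (p + 1) = 0 by omega]
    simp

lemma fLk_one (p k : ℕ) : fLk (p + k + 1) k 1 = k := by
  rw [fLk_eq]
  have := aux_H p k (p + k + 1) le_rfl
  rw [show p + k + 1 - (p + 1) = k by omega] at this
  rw [← this]
  simp

lemma fLk_deriv (p k : ℕ) (x : ℝ) (hx : 0 < x) :
    HasDerivAt (fLk (p + k + 1) k) (gAux p k x / x) x := by
  have : fLk (p + k + 1) k = fun x => ∑ i ∈ range k,
    ((-1 : ℝ) ^ i * ((p + i).choose i : ℝ)) *
      (((p + k + 1).choose (p + 2 + i) : ℝ) * x ^ (p + 2 + i)) := by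
    funext x; exact fLk_eq p k x
  rw [this]
  unfold gAux
  rw [Finset.sum_div]
  apply HasDerivAt.fun_sum
  intro i _
  have h := (((hasDerivAt_pow (p + 2 + i) x).const_mul
    ((p + k + 1).choose (p + 2 + i) : ℝ)).const_mul ((-1 : ℝ) ^ i * ((p + i).choose i : ℝ)))
  refine h.congr_deriv ?_
  rw [show p + 2 + i = (p + 1 + i) + 1 by omega, Nat.add_sub_cancel, pow_succ x]
  field_simp

lemma fLk_le (p k : ℕ) (hk : 1 ≤ k) (x : ℝ) (h0 : 0 ≤ x) (h1 : x ≤ 1) :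
    fLk (p + k + 1) k x ≤ k * x ^ (((p + k + 1 : ℕ) : ℝ) / k) := by
  have hk0 : (0 : ℝ) < k := by exact_mod_cast hk
  set a : ℝ := ((p + k + 1 : ℕ) : ℝ) / k with ha
  have hL : ((p + k + 1 : ℕ) : ℝ) = k * a := by rw [ha]; field_simp
  rcases h0.eq_or_lt with rfl | hx
  · have : fLk (p + k + 1) k 0 = 0 := by
      rw [fLk_eq]
      apply Finset.sum_eq_zero
      intro i _
      rw [zero_pow (by omega)]
      simp
    rw [this]
    have := Real.rpow_nonneg (le_refl (0 : ℝ)) a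
    positivity
  have hd : ∀ y : ℝ, 0 < y → HasDerivAt (fun y => fLk (p + k + 1) k y * y ^ (-a))
      (gAux p k y / y * y ^ (-a) + fLk (p + k + 1) k y * (-a * y ^ (-a - 1))) y := fun y hy =>
    (fLk_deriv p k y hy).mul (Real.hasDerivAt_rpow_const (Or.inl hy.ne'))
  have hm : MonotoneOn (fun y => fLk (p + k + 1) k y * y ^ (-a)) (Set.Icc x 1) := by
    apply monotoneOn_of_deriv_nonneg (convex_Icc x 1)
    · intro y hy
      exact (hd y (lt_of_lt_of_le hx hy.1)).continuousAt.continuousWithinAt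
    · intro y hy
      rw [interior_Icc] at hy
      exact (hd y (lt_trans hx hy.1)).differentiableAt.differentiableWithinAt
    · intro y hy
      rw [interior_Icc] at hy
      have hy0 := lt_trans hx hy.1
      rw [(hd y hy0).deriv, Real.rpow_sub_one hy0.ne']
      have h := fLk_le_gAux p k y hy0.le hy.2.le
      rw [hL, mul_assoc] at h
      have h2 := le_of_mul_le_mul_left h hk0
      have : gAux p k y / y * y ^ (-a) + fLk (p + k + 1) k y * (-a * (y ^ (-a) / y))
        = (gAux p k y - a * fLk (p + k + 1) k y) * (y ^ (-a) / y) := by ring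
      rw [this]
      have := Real.rpow_pos_of_pos hy0 (-a)
      apply mul_nonneg (by linarith) (by positivity)
  have h := hm (Set.left_mem_Icc.2 h1) (Set.right_mem_Icc.2 h1) h1
  simp only [fLk_one, Real.one_rpow, mul_one] at h
  rw [Real.rpow_neg hx.le, ← div_eq_mul_inv, div_le_iff₀ (Real.rpow_pos_of_pos hx a)] at h
  exact h

/-- upper bound, Theorem 2.2(i): for `1 ≤ k < L`, `0 ≤ λ ≤ 1`, and
`ū` satisfying `ū_0 = 1`, `ū_{m+1} = (λ/k)·f(ū_m)`, one has
`ū_m ≤ λ^{((L/k)^m − 1)/(L/k − 1)}` for all `m`. -/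
theorem fixedPoint_upper_bound (L k : ℕ) (hk : 1 ≤ k) (hkL : k < L)
    (lam : ℝ) (hlam0 : 0 ≤ lam) (hlam1 : lam ≤ 1)
    (ubar : ℕ → ℝ) (h0 : ubar 0 = 1)
    (hrec : ∀ m : ℕ, ubar (m + 1) = lam / k * fLk L k (ubar m)) (m : ℕ) :
    ubar m ≤ lam ^ ((((L : ℝ) / k) ^ m - 1) / ((L : ℝ) / k - 1)) := by
  have hk0 : (0 : ℝ) < k := by exact_mod_cast hk
  have ha1 : 1 < (L : ℝ) / k := by
    rw [lt_div_iff₀ hk0, one_mul]; exact_mod_cast hkL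
  obtain ⟨p, rfl⟩ : ∃ p, L = p + k + 1 := ⟨L - k - 1, by omega⟩
  have key := fLk_le p k hk
  set a : ℝ := ((p + k + 1 : ℕ) : ℝ) / k with ha
  have hpos : ∀ m : ℕ, 0 ≤ (a ^ m - 1) / (a - 1) := fun m =>
    div_nonneg (by linarith [one_le_pow₀ ha1.le (n := m)]) (by linarith)
  have main : ∀ m : ℕ, 0 ≤ ubar m ∧ ubar m ≤ lam ^ ((a ^ m - 1) / (a - 1)) := by
    intro m
    induction m with
    | zero => simp [h0]
    | succ m ih =>
      obtain ⟨ih0, ih1⟩ := ih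
      have hle : ubar m ≤ 1 := ih1.trans (Real.rpow_le_one hlam0 hlam1 (hpos m))
      rw [hrec]
      refine ⟨mul_nonneg (by positivity) (fLk_nonneg p k _ ih0 hle), ?_⟩
      have e : (a ^ (m + 1) - 1) / (a - 1) = 1 + (a ^ m - 1) / (a - 1) * a := by
        have : a - 1 ≠ 0 := by linarith
        field_simp
        ring
      have hp2 : 0 ≤ (a ^ m - 1) / (a - 1) * a := mul_nonneg (hpos m) (by linarith)
      rw [e, Real.rpow_add_of_nonneg hlam0 zero_le_one hp2, Real.rpow_one, Real.rpow_mul hlam0]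
      calc lam / k * fLk (p + k + 1) k (ubar m) ≤ lam / k * (k * ubar m ^ a) :=
            mul_le_mul_of_nonneg_left (key _ ih0 hle) (by positivity)
        _ = lam * ubar m ^ a := by field_simp
        _ ≤ _ := mul_le_mul_of_nonneg_left
            (Real.rpow_le_rpow ih0 ih1 (by linarith)) hlam0
  exact (main m).2
end

section
/- Let 1 ≤ k ≤ L be integers, λ > 0, and let u be a solution of the mean-field ODE system taking values in Ū. Then for all j ≥ 0 and all t ≥ 0, u_j(t) ≤ ∑_{i=0}^{j} u_i(0)·(λkt)^{j−i}/(j−i)!. -/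
open Finset Set

/-- Membership in `Ū`: real sequences with `1 = u_0 ≥ u_1 ≥ … ≥ 0`. -/
def InUbar (u : ℕ → ℝ) : Prop :=
  u 0 = 1 ∧ (∀ j, u (j + 1) ≤ u j) ∧ (∀ j, 0 ≤ u j)

/-- A `Ū`-valued solution of the mean-field ODE system with initial condition `g`. -/
def IsMFSol (L k : ℕ) (lam : ℝ) (g : ℕ → ℝ) (u : ℝ → ℕ → ℝ) : Prop :=
  (∀ j, u 0 j = g j) ∧
  (∀ t ∈ Set.Ici (0 : ℝ), InUbar (u t)) ∧
  (∀ j, 1 ≤ j → ∀ t ∈ Set.Ici (0 : ℝ),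
    HasDerivWithinAt (fun τ => u τ j)
      (lam * (fLk L k (u t (j - 1)) - fLk L k (u t j)) - k * (u t j - u t (j + 1)))
      (Set.Ici (0 : ℝ)) t)

/-- Tail probability `P(Bin(p+1+k, x) ≥ p+1)` as a polynomial. -/
noncomputable def tailT (p k : ℕ) (x : ℝ) : ℝ :=
  ∑ i ∈ Finset.range (k + 1),
    ((p + 1 + k).choose (p + 1 + i) : ℝ) * ((p + i).choose i : ℝ) * (-1 : ℝ) ^ i * x ^ (p + 1 + i)

/-- The function `f` reindexed, with `L - k = p + 1`. -/
noncomputable def excS (p k : ℕ) (x : ℝ) : ℝ :=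
  ∑ i ∈ Finset.range k,
    ((p + 1 + k).choose (p + 2 + i) : ℝ) * ((p + i).choose i : ℝ) * (-1 : ℝ) ^ i * x ^ (p + 2 + i)

lemma tailT_succ (p k : ℕ) (x : ℝ) :
    tailT p (k + 1) x = tailT p k x
      + x ^ (p + 1) * (((p + (k + 1)).choose p : ℝ) * (1 - x) ^ (k + 1)) := by
  have h1 : tailT p k x = ∑ i ∈ Finset.range (k + 1 + 1),
      ((p + 1 + k).choose (p + 1 + i) : ℝ) * ((p + i).choose i : ℝ) * (-1 : ℝ) ^ i
        * x ^ (p + 1 + i) := by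
    rw [Finset.sum_range_succ, Nat.choose_eq_zero_of_lt (by omega : p + 1 + k < p + 1 + (k + 1))]
    simp [tailT]
  have h2 : (1 - x) ^ (k + 1) = (-x + 1) ^ (k + 1) := by ring
  rw [h1, h2, add_pow, Finset.mul_sum, Finset.mul_sum, ← Finset.sum_add_distrib]
  unfold tailT
  refine Finset.sum_congr rfl fun i hi => ?_
  have hi' : i ≤ k + 1 := by simpa [Nat.lt_succ_iff] using hi
  have e1 : (p + 1 + (k + 1)).choose (p + 1 + i)
      = (p + 1 + k).choose (p + i) + (p + 1 + k).choose (p + 1 + i) := by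
    have := Nat.choose_succ_succ (p + 1 + k) (p + i)
    rw [show p + 1 + (k + 1) = (p + 1 + k).succ by omega,
      show p + 1 + i = (p + i).succ by omega]
    exact this
  have e2 : (p + 1 + k).choose (p + i) * (p + i).choose i
      = (p + (k + 1)).choose p * (k + 1).choose i := by
    have h := Nat.choose_mul (n := p + (k + 1)) (k := p + i) (s := p) (by omega)
    have hs : (p + i).choose i = (p + i).choose p := by
      rw [Nat.choose_symm_add]
    rw [hs, show p + 1 + k = p + (k + 1) by omega, h]
    congr 2 <;> omega
  have e2' : ((p + 1 + k).choose (p + i) : ℝ) * ((p + i).choose i : ℝ)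
      = ((p + (k + 1)).choose p : ℝ) * ((k + 1).choose i : ℝ) := by exact_mod_cast e2
  rw [e1]
  push_cast
  have e3 : (-x) ^ i = (-1) ^ i * x ^ i := by rw [← mul_pow]; ring
  rw [e3, pow_add x (p + 1) i, one_pow]
  linear_combination ((-1) ^ i * (x ^ (p + 1) * x ^ i)) * e2'

lemma tailT_eq (p k : ℕ) (x : ℝ) :
    tailT p k x = x ^ (p + 1) * ∑ i ∈ Finset.range (k + 1),
      ((i + p).choose p : ℝ) * (1 - x) ^ i := by
  induction k with
  | zero => simp [tailT]
  | succ k ih =>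
    rw [tailT_succ, ih, Finset.sum_range_succ _ (k + 1), mul_add, add_comm p (k + 1)]

lemma tailT_nonneg (p k : ℕ) {x : ℝ} (h0 : 0 ≤ x) (h1 : x ≤ 1) : 0 ≤ tailT p k x := by
  rw [tailT_eq]
  have : 0 ≤ 1 - x := by linarith
  positivity

lemma tailT_le_one (p k : ℕ) {x : ℝ} (h0 : 0 ≤ x) (h1 : x ≤ 1) : tailT p k x ≤ 1 := by
  rw [tailT_eq]
  rcases h0.eq_or_lt with rfl | hx
  · simp
  have hy : 0 ≤ 1 - x := by linarith
  have hs := hasSum_choose_mul_geometric_of_norm_lt_one p (r := 1 - x)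
    (by rw [Real.norm_eq_abs, abs_lt]; constructor <;> linarith)
  have hle := sum_le_hasSum (Finset.range (k + 1)) (fun i _ => by positivity) hs
  rw [sub_sub_cancel] at hle
  calc _ ≤ x ^ (p + 1) * (1 / x ^ (p + 1)) := by gcongr
    _ = 1 := by field_simp

lemma excS_succ (p k : ℕ) (x : ℝ) : excS p (k + 1) x = excS p k x + x * tailT p k x := by
  have h1 : excS p k x = ∑ i ∈ Finset.range (k + 1),
      ((p + 1 + k).choose (p + 2 + i) : ℝ) * ((p + i).choose i : ℝ) * (-1 : ℝ) ^ i
        * x ^ (p + 2 + i) := by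
    rw [Finset.sum_range_succ, Nat.choose_eq_zero_of_lt (by omega : p + 1 + k < p + 2 + k)]
    simp [excS]
  rw [h1]
  unfold excS tailT
  rw [Finset.mul_sum, ← Finset.sum_add_distrib]
  refine Finset.sum_congr rfl fun i _ => ?_
  have e1 : (p + 1 + (k + 1)).choose (p + 2 + i)
      = (p + 1 + k).choose (p + 1 + i) + (p + 1 + k).choose (p + 2 + i) := by
    have := Nat.choose_succ_succ (p + 1 + k) (p + 1 + i)
    rw [show p + 1 + (k + 1) = (p + 1 + k).succ by omega,
      show p + 2 + i = (p + 1 + i).succ by omega]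
    exact this
  rw [e1]
  push_cast
  rw [show p + 2 + i = (p + 1 + i) + 1 by omega, pow_succ]
  ring

lemma excS_bounds (p k : ℕ) {x : ℝ} (h0 : 0 ≤ x) (h1 : x ≤ 1) :
    0 ≤ excS p k x ∧ excS p k x ≤ k * x := by
  induction k with
  | zero => simp [excS]
  | succ k ih =>
    rw [excS_succ]
    have a := mul_nonneg h0 (tailT_nonneg p k h0 h1)
    have b := mul_le_mul_of_nonneg_left (tailT_le_one p k h0 h1) h0
    push_cast
    constructor <;> linarith [ih.1, ih.2]

lemma fLk_bounds (L k : ℕ) (hk : 1 ≤ k) (hkL : k ≤ L) {x : ℝ} (h0 : 0 ≤ x) (h1 : x ≤ 1) :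
    0 ≤ fLk L k x ∧ fLk L k x ≤ k * x := by
  have hre : fLk L k x = ∑ i ∈ Finset.range k,
      (L.choose (L - k + (i + 1)) : ℝ) * ((L - k + (i + 1) - 2).choose i : ℝ) *
      (-1 : ℝ) ^ i * x ^ (L - k + (i + 1)) := by
    unfold fLk
    rw [← Finset.Ico_add_one_right_eq_Icc, Finset.sum_Ico_eq_sum_range]
    refine Finset.sum_congr (by simp) fun i _ => ?_
    rw [add_comm 1 i, Nat.add_sub_cancel]
  rcases hkL.eq_or_lt with rfl | hlt
  · have : fLk k k x = k * x := by
      rw [hre, Finset.sum_eq_single 0]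
      · simp
      · intro i _ hi
        rw [Nat.choose_eq_zero_of_lt (by omega : k - k + (i + 1) - 2 < i)]
        simp
      · intro h; simp at h; omega
    rw [this]
    exact ⟨by positivity, le_rfl⟩
  · obtain ⟨p, rfl⟩ : ∃ p, L = p + 1 + k := ⟨L - k - 1, by omega⟩
    have : fLk (p + 1 + k) k x = excS p k x := by
      rw [hre]
      unfold excS
      refine Finset.sum_congr rfl fun i _ => ?_
      rw [show p + 1 + k - k + (i + 1) - 2 = p + i by omega,
        show p + 1 + k - k + (i + 1) = p + 2 + i by omega]
    rw [this]
    exact excS_bounds p k h0 h1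

lemma taylor_deriv (c : ℝ) (a : ℕ → ℝ) (j : ℕ) (t : ℝ) :
    HasDerivAt (fun t : ℝ => ∑ i ∈ Finset.range (j + 1 + 1),
        a i * (c * t) ^ (j + 1 - i) / (Nat.factorial (j + 1 - i) : ℝ))
      (c * ∑ i ∈ Finset.range (j + 1), a i * (c * t) ^ (j - i) / (Nat.factorial (j - i) : ℝ))
      t := by
  simp_rw [Finset.sum_range_succ _ (j + 1)]
  simp only [Nat.sub_self, pow_zero]
  rw [Finset.mul_sum]
  refine HasDerivAt.add_const _ (HasDerivAt.fun_sum fun i hi => ?_)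
  have hi' : i ≤ j := by simpa [Nat.lt_succ_iff] using hi
  rw [show j + 1 - i = (j - i) + 1 by omega]
  have h := ((((hasDerivAt_id t).const_mul c).pow (j - i + 1)).const_mul (a i)).div_const
    ((Nat.factorial (j - i + 1) : ℝ))
  refine h.congr_deriv ?_
  have hf : (Nat.factorial (j - i) : ℝ) ≠ 0 := by positivity
  rw [Nat.factorial_succ]
  push_cast
  have hf2 : (((j - i : ℕ) : ℝ) + 1) ≠ 0 := by positivity
  simp only [id, Nat.add_sub_cancel]
  field_simp

/-- Lemma 5.4: for any `Ū`-valued solution `u` of the mean-field ODE system,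
`u_j(t) ≤ ∑_{i=0}^{j} u_i(0)·(λkt)^{j−i}/(j−i)!` for all `j ≥ 0` and `t ≥ 0`. -/
theorem mfSol_taylor_estimate (L k : ℕ) (hk : 1 ≤ k) (hkL : k ≤ L)
    (lam : ℝ) (hlam : 0 < lam) (g : ℕ → ℝ) (u : ℝ → ℕ → ℝ)
    (hu : IsMFSol L k lam g u) :
    ∀ j : ℕ, ∀ t ∈ Set.Ici (0 : ℝ),
      u t j ≤ ∑ i ∈ Finset.range (j + 1),
        u 0 i * (lam * k * t) ^ (j - i) / (Nat.factorial (j - i) : ℝ) := by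
  obtain ⟨_, hU, hD⟩ := hu
  have hle1 : ∀ t ∈ Set.Ici (0 : ℝ), ∀ j, u t j ≤ 1 := by
    intro t ht j
    obtain ⟨h0, hs, _⟩ := hU t ht
    exact h0 ▸ antitone_nat_of_succ_le hs (Nat.zero_le j)
  intro j
  induction j with
  | zero =>
    intro t ht
    simp [(hU t ht).1, (hU 0 (Set.mem_Ici.2 le_rfl)).1]
  | succ j ih =>
    intro t ht
    have ht0 : (0 : ℝ) ≤ t := ht
    refine image_le_of_deriv_right_le_deriv_boundary
      (f := fun s => u s (j + 1))
      (f' := fun s => lam * (fLk L k (u s j) - fLk L k (u s (j + 1)))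
        - k * (u s (j + 1) - u s (j + 1 + 1)))
      (a := 0) (b := t)
      (B := fun s => ∑ i ∈ Finset.range (j + 1 + 1),
        u 0 i * (lam * k * s) ^ (j + 1 - i) / (Nat.factorial (j + 1 - i) : ℝ))
      (B' := fun s => lam * k * ∑ i ∈ Finset.range (j + 1),
        u 0 i * (lam * k * s) ^ (j - i) / (Nat.factorial (j - i) : ℝ))
      ?_ ?_ ?_ ?_ ?_ ?_ (Set.right_mem_Icc.2 ht0)
    · intro s hs
      exact ((hD (j + 1) (by omega) s hs.1).continuousWithinAt).mono fun y hy => hy.1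
    · intro s hs
      exact (hD (j + 1) (by omega) s hs.1).mono (Set.Ici_subset_Ici.2 hs.1)
    · simp only [mul_zero]
      rw [Finset.sum_range_succ, Finset.sum_eq_zero]
      · simp
      · intro i hi
        have hi' := Finset.mem_range.1 hi
        rw [zero_pow (by omega)]
        simp
    · intro s _
      exact (taylor_deriv (lam * k) (u 0) j s).continuousAt.continuousWithinAt
    · intro s _
      exact (taylor_deriv (lam * k) (u 0) j s).hasDerivWithinAt
    · intro s hs
      have hs0 : s ∈ Set.Ici (0 : ℝ) := hs.1
      obtain ⟨_, hmono, hnn⟩ := hU s hs0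
      have b1 := (fLk_bounds L k hk hkL (hnn j) (hle1 s hs0 j)).2
      have b2 := (fLk_bounds L k hk hkL (hnn (j + 1)) (hle1 s hs0 (j + 1))).1
      have b3 : 0 ≤ (k : ℝ) * (u s (j + 1) - u s (j + 1 + 1)) :=
        mul_nonneg (Nat.cast_nonneg k) (sub_nonneg.2 (hmono (j + 1)))
      have b4 := ih s hs0
      have b5 : lam * (fLk L k (u s j) - fLk L k (u s (j + 1))) ≤ lam * (k * u s j) :=
        mul_le_mul_of_nonneg_left (by linarith) hlam.le
      have b6 := mul_le_mul_of_nonneg_left b4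
        (mul_nonneg hlam.le (Nat.cast_nonneg (α := ℝ) k))
      linarith
end

section
/- Let 1 ≤ k ≤ L be integers, λ > 0, and let u^{(1)} and u^{(2)} be solutions of the mean-field ODE system taking values in Ū with u^{(1)}_j(0) ≥ u^{(2)}_j(0) for all j ≥ 0. Then u^{(1)}_j(t) ≥ u^{(2)}_j(t) for all j ≥ 0 and all t ≥ 0. -/
open Finset Set

theorem fLk_shift (m q : ℕ) (x : ℝ) : fLk (m + q + 2) (q + 1) x =
    ∑ r ∈ Finset.range (q + 1), ((m + q + 2).choose (m + r + 2) : ℝ) * ((m + r).choose r : ℝ) *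
      (-1 : ℝ) ^ r * x ^ (m + r + 2) := by
  unfold fLk
  rw [Finset.range_eq_Ico, ← Finset.Ico_succ_right_eq_Icc]
  rw [Finset.sum_Ico_eq_sum_range, Finset.sum_Ico_eq_sum_range]
  refine Finset.sum_congr (by simp) fun r _ => ?_
  have h1 : m + q + 2 - (q + 1) + (1 + r) = m + r + 2 := by omega
  have h2 : 1 + r - 1 = r := by omega
  have h3 : m + r + 2 - 2 = m + r := by omega
  rw [h1, h2, h3, zero_add]

theorem coeff_aux (m q r : ℕ) :
    ((m + q + 2).choose (m + r + 2) : ℝ) * ((m + r).choose r : ℝ) * ((m + r + 2) * (m + r + 1))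
      = (m + q + 2) * (m + q + 1) * (m + q).choose m * q.choose r := by
  have a1 := Nat.add_one_mul_choose_eq (m + q + 1) (m + r + 1)
  have a2 := Nat.add_one_mul_choose_eq (m + q) (m + r)
  have a3 := Nat.choose_mul (n := m + q) (k := m + r) (s := m) (by omega)
  rw [Nat.add_sub_cancel_left, Nat.add_sub_cancel_left] at a3
  have a4 : (m + r).choose m = (m + r).choose r := Nat.choose_symm_add
  rw [a4] at a3
  have b1 : ((m : ℝ) + q + 1 + 1) * (m + q + 1).choose (m + r + 1)
    = (m + q + 2).choose (m + r + 2) * (m + r + 1 + 1) := by exact_mod_cast a1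
  have b2 : ((m : ℝ) + q + 1) * (m + q).choose (m + r)
    = (m + q + 1).choose (m + r + 1) * (m + r + 1) := by exact_mod_cast a2
  have b3 : ((m + q).choose (m + r) : ℝ) * (m + r).choose r
    = (m + q).choose m * q.choose r := by exact_mod_cast a3
  linear_combination (-((m + r).choose r : ℝ) * (m + r + 1)) * b1
    - (((m + r).choose r : ℝ) * (m + q + 2)) * b2 + ((m : ℝ) + q + 2) * (m + q + 1) * b3

theorem fLk_mono (L k : ℕ) (hk : 1 ≤ k) (hkL : k ≤ L) :
    MonotoneOn (fLk L k) (Set.Icc 0 1) := by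
  rcases hkL.eq_or_lt with rfl | hlt
  · intro x hx y hy hxy
    unfold fLk
    refine Finset.sum_le_sum fun i hi => ?_
    rw [Finset.mem_Icc] at hi
    rcases hi.1.eq_or_lt with rfl | h2
    · simp only [Nat.sub_self, zero_add, pow_one]
      norm_num
      gcongr
    · have : (k - k + i - 2).choose (i - 1) = 0 := Nat.choose_eq_zero_of_lt (by omega)
      rw [this]; simp
  · obtain ⟨q, rfl⟩ : ∃ q, k = q + 1 := ⟨k - 1, by omega⟩
    obtain ⟨m, rfl⟩ : ∃ m, L = m + q + 2 := ⟨L - q - 2, by omega⟩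
    set c : ℕ → ℝ := fun r => ((m + q + 2).choose (m + r + 2) : ℝ) * ((m + r).choose r : ℝ) *
      (-1 : ℝ) ^ r with hc
    have hf : fLk (m + q + 2) (q + 1) =
        fun x => ∑ r ∈ Finset.range (q + 1), c r * x ^ (m + r + 2) :=
      funext fun x => fLk_shift m q x
    rw [hf]
    have d1 : ∀ x : ℝ, HasDerivAt (fun x => ∑ r ∈ Finset.range (q + 1), c r * x ^ (m + r + 2))
        (∑ r ∈ Finset.range (q + 1), c r * ((m + r + 2 : ℕ) * x ^ (m + r + 1))) x := fun x =>
      HasDerivAt.fun_sum fun r _ => (hasDerivAt_pow (m + r + 2) x).const_mul (c r)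
    have d2 : ∀ x : ℝ, HasDerivAt
        (fun x => ∑ r ∈ Finset.range (q + 1), c r * ((m + r + 2 : ℕ) * x ^ (m + r + 1)))
        (∑ r ∈ Finset.range (q + 1), c r * ((m + r + 2 : ℕ) * ((m + r + 1 : ℕ) * x ^ (m + r)))) x :=
      fun x => HasDerivAt.fun_sum fun r _ =>
        ((hasDerivAt_pow (m + r + 1) x).const_mul _).const_mul (c r)
    have e2 : ∀ x : ℝ,
        (∑ r ∈ Finset.range (q + 1), c r * ((m + r + 2 : ℕ) * ((m + r + 1 : ℕ) * x ^ (m + r))))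
        = (m + q + 2) * (m + q + 1) * (m + q).choose m * x ^ m * (1 - x) ^ q := by
      intro x
      have : (1 - x) ^ q = (-x + 1) ^ q := by ring
      rw [this, add_pow, Finset.mul_sum]
      refine Finset.sum_congr rfl fun r _ => ?_
      have := coeff_aux m q r
      simp only [hc, one_pow, mul_one]
      push_cast
      rw [neg_pow x r, pow_add]
      linear_combination ((-1) ^ r * x ^ m * x ^ r) * this
    have m1 : MonotoneOn
        (fun x : ℝ => ∑ r ∈ Finset.range (q + 1), c r * ((m + r + 2 : ℕ) * x ^ (m + r + 1)))
        (Set.Icc 0 1) := by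
      refine monotoneOn_of_deriv_nonneg (convex_Icc 0 1)
        (fun x _ => (d2 x).continuousAt.continuousWithinAt)
        (fun x _ => (d2 x).differentiableAt.differentiableWithinAt) fun x hx => ?_
      rw [(d2 x).deriv, e2]
      have hx' := interior_subset hx
      have h0 : 0 ≤ x := hx'.1
      have h1 : 0 ≤ 1 - x := sub_nonneg.2 hx'.2
      positivity
    refine monotoneOn_of_deriv_nonneg (convex_Icc 0 1)
      (fun x _ => (d1 x).continuousAt.continuousWithinAt)
      (fun x _ => (d1 x).differentiableAt.differentiableWithinAt) fun x hx => ?_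
    rw [(d1 x).deriv]
    have hx' := interior_subset hx
    have := m1 (by simp) hx' hx'.1
    simpa using this

theorem fLk_lip (L k : ℕ) : ∃ K : ℝ, 0 ≤ K ∧ ∀ x ∈ Set.Icc (0 : ℝ) 1, ∀ y ∈ Set.Icc (0 : ℝ) 1,
    |fLk L k y - fLk L k x| ≤ K * |y - x| := by
  have hcd : ContDiff ℝ 1 (fLk L k) := by
    unfold fLk
    fun_prop
  obtain ⟨K, hK⟩ := (hcd.locallyLipschitz.locallyLipschitzOn
    (s := Set.Icc (0 : ℝ) 1)).exists_lipschitzOnWith_of_compact isCompact_Icc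
  refine ⟨K, K.2, fun x hx y hy => ?_⟩
  simpa [Real.dist_eq] using hK.dist_le_mul y hy x hx

theorem InUbar.mem_Icc {u : ℕ → ℝ} (h : InUbar u) (j : ℕ) : u j ∈ Set.Icc (0 : ℝ) 1 := by
  refine ⟨h.2.2 j, ?_⟩
  rw [← h.1]
  exact antitone_nat_of_succ_le h.2.1 (Nat.zero_le j)

/-- Lemma 5.6: monotonicity of the mean-field ODE system. If two
`Ū`-valued solutions satisfy `u^{(1)}_j(0) ≥ u^{(2)}_j(0)` for all `j`, then
`u^{(1)}_j(t) ≥ u^{(2)}_j(t)` for all `j ≥ 0` and `t ≥ 0`. -/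
theorem mfSol_monotone (L k : ℕ) (hk : 1 ≤ k) (hkL : k ≤ L)
    (lam : ℝ) (hlam : 0 < lam) (g1 g2 : ℕ → ℝ) (u1 u2 : ℝ → ℕ → ℝ)
    (hu1 : IsMFSol L k lam g1 u1) (hu2 : IsMFSol L k lam g2 u2)
    (hinit : ∀ j, u2 0 j ≤ u1 0 j) :
    ∀ j : ℕ, ∀ t ∈ Set.Ici (0 : ℝ), u2 t j ≤ u1 t j := by
  obtain ⟨K, hK0, hK⟩ := fLk_lip L k
  have hmono := fLk_mono L k hk hkL
  obtain ⟨-, hU1, hd1⟩ := hu1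
  obtain ⟨-, hU2, hd2⟩ := hu2
  have hC0 : 0 ≤ lam * K + k := by positivity
  have hdiff : ∀ x ∈ Set.Icc (0 : ℝ) 1, ∀ y ∈ Set.Icc (0 : ℝ) 1, ∀ p : ℝ, 0 ≤ p → y - x ≤ p →
      fLk L k y - fLk L k x ≤ K * p := by
    intro x hx y hy p hp hyx
    rcases le_total y x with h | h
    · have := hmono hy hx h
      have : 0 ≤ K * p := by positivity
      linarith
    · calc _ ≤ _ := le_abs_self _
        _ ≤ K * |y - x| := hK x hx y hy
        _ ≤ K * p := by rw [abs_of_nonneg (by linarith)]; gcongr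
  have key : ∀ n : ℕ, ∀ j : ℕ, ∀ t : ℝ, 0 ≤ t →
      u2 t j - u1 t j ≤ ((lam * K + k) * t) ^ n / (n.factorial : ℝ) := by
    intro n
    induction n with
    | zero =>
      intro j t ht
      have h1 := (hU1 t ht).mem_Icc j
      have h2 := (hU2 t ht).mem_Icc j
      simp only [pow_zero, Nat.factorial_zero, Nat.cast_one, div_one]
      linarith [h1.1, h2.2]
    | succ n ih =>
      intro j t ht
      rcases Nat.eq_zero_or_pos j with rfl | hj
      · rw [(hU1 t ht).1, (hU2 t ht).1, sub_self]
        positivity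
      refine le_of_forall_pos_le_add fun ε hε => ?_
      have h1t : 0 < 1 + t := by linarith
      set δ := ε / (1 + t) with hδ
      have hδ0 : 0 < δ := by positivity
      have hεδ : ε = δ * (1 + t) := by rw [hδ]; field_simp
      set C := lam * K + k with hC
      have hder : ∀ x : ℝ, 0 ≤ x → HasDerivWithinAt (fun τ => u2 τ j - u1 τ j) _ (Set.Ici 0) x :=
        fun x hx => (hd2 j hj x hx).sub (hd1 j hj x hx)
      have hB : ∀ x : ℝ, HasDerivAt
          (fun τ : ℝ => (C * τ) ^ (n + 1) / ((n + 1).factorial : ℝ) + δ * (1 + τ))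
          (C * ((C * x) ^ n / (n.factorial : ℝ)) + δ) x := by
        intro x
        have a := ((((hasDerivAt_id x).const_mul C).fun_pow (n + 1)).div_const
          ((n + 1).factorial : ℝ)).add (((hasDerivAt_id x).const_add 1).const_mul δ)
        refine a.congr_deriv ?_
        have hn : (n.factorial : ℝ) ≠ 0 := by positivity
        have hn1 : (n : ℝ) + 1 ≠ 0 := by positivity
        rw [Nat.factorial_succ]
        push_cast
        simp only [id, Nat.add_sub_cancel, mul_one]
        field_simp
      have := image_le_of_deriv_right_lt_deriv_boundary (a := 0) (b := t)
        (fun x hx => ((hder x hx.1).continuousWithinAt).mono Set.Icc_subset_Ici_self)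
        (fun x hx => (hder x hx.1).mono (Set.Ici_subset_Ici.2 hx.1))
        (by
          have := hinit j
          have h3 : 0 ≤ (C * 0) ^ (n + 1) / ((n + 1).factorial : ℝ) := by positivity
          simp only [add_zero, mul_one]
          linarith) hB
        (by
          intro x hx heq
          have hx0 : 0 ≤ x := hx.1
          set p := (C * x) ^ n / (n.factorial : ℝ) with hp
          have hp0 : 0 ≤ p := by positivity
          have hpos : 0 < u2 x j - u1 x j := by
            rw [heq]; positivity
          have i1 := ih (j - 1) x hx0
          have i2 := ih (j + 1) x hx0
          have q1 := hdiff _ ((hU1 x hx0).mem_Icc (j - 1)) _ ((hU2 x hx0).mem_Icc (j - 1)) p hp0 i1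
          have q2 := hmono ((hU1 x hx0).mem_Icc j) ((hU2 x hx0).mem_Icc j) (by linarith)
          have q3 := mul_le_mul_of_nonneg_left q1 hlam.le
          have q4 := mul_le_mul_of_nonneg_left q2 hlam.le
          have q5 := mul_le_mul_of_nonneg_left i2 (Nat.cast_nonneg (α := ℝ) k)
          have q6 := mul_nonneg (Nat.cast_nonneg (α := ℝ) k) hpos.le
          rw [hC]
          nlinarith) (Set.right_mem_Icc.2 ht)
      rw [hεδ]
      exact this
  intro j t ht
  have hlim := FloorSemiring.tendsto_pow_div_factorial_atTop ((lam * K + k) * t)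
  have := ge_of_tendsto' hlim fun n => key n j t ht
  linarith
end
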